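/- Let s > 0, x ∈ ℝ², let S ⊆ ℝ² be nonempty, and let ω ⊂ ℝ² be a finite configuration. Suppose (x₀, x₁, …, x_{N+1}) is a minimizer for A^s_ω(x, S), with length L. Let z ∈ ω with z ∉ {x₁, …, x_N}, let i ∈ {0, …, N}, and suppose the orthogonal projection z* of z onto the line through x_i and x_{i+1} lies on the closed segment between x_i and x_{i+1}, with s₁ = |x_i − z*| > 0 and s₂ = |x_{i+1} − z*| > 0, and set h = |z − z*|. Then, with B = (h²/2)·(1/s₁ + 1/s₂), one has 2·L·B + B² ≥ 2s. -/

import Mathlib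

/-!
Inserting the unvisited point `z` between `x_i` and `x_{i+1}` gives another admissible sequence,
with one more interior point (`isAdmissible_insertPt`). The inserted polygonal path is longer by
`|x_i - z| + |z - x_{i+1}| - |x_i - x_{i+1}|` (`pathLength_insertPt`), and by Pythagoras and
`√(a² + h²) ≤ a + h²/(2a)` this is at most `B` (`norm_sub_le_of_orth`). The action of the new
sequence is at least the infimum, so `(L + B)²/(2s) - (N + 1) ≥ L²/(2s) - N`, which rearranges to
`2LB + B² ≥ 2s`. The infimum is a genuine lower bound, since a sequence visits at most `|ω|`
points and hence has action at least `-|ω|` (`IsAdmissible.le_card`).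
-/

open scoped RealInnerProductSpace

noncomputable section

/-- Points of the plane. -/
abbrev Pt := EuclideanSpace ℝ (Fin 2)

noncomputable instance : DecidableEq Pt := Classical.decEq _

/-- An admissible sequence for the configuration `cfg`, start `x` and target set `S`:
`p 0 = x`, `p (N+1) ∈ S`, and the interior points `p 1, …, p N` are pairwise distinct
points of `cfg`. -/
def IsAdmissible (cfg : Finset Pt) (x : Pt) (S : Set Pt) (N : ℕ)
    (p : Fin (N + 2) → Pt) : Prop :=
  p 0 = x ∧ p (Fin.last (N + 1)) ∈ S ∧
    (∀ i : Fin (N + 2), i ≠ 0 → i ≠ Fin.last (N + 1) → p i ∈ cfg) ∧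
    (∀ i j : Fin (N + 2), i ≠ 0 → i ≠ Fin.last (N + 1) → j ≠ 0 → j ≠ Fin.last (N + 1) →
      i ≠ j → p i ≠ p j)

/-- The length `L` of the polygonal path through `p 0, …, p (N+1)`. -/
def pathLength (N : ℕ) (p : Fin (N + 2) → Pt) : ℝ :=
  ∑ i : Fin (N + 1), ‖p i.succ - p i.castSucc‖

/-- The action `L²/(2s) − N` of an admissible sequence. -/
def pathAction (s : ℝ) (N : ℕ) (p : Fin (N + 2) → Pt) : ℝ :=
  pathLength N p ^ 2 / (2 * s) - N

/-- The action `A^s_ω(x, S)`: the infimum of the action over admissible sequences. -/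
def actionInf (cfg : Finset Pt) (s : ℝ) (x : Pt) (S : Set Pt) : ℝ :=
  sInf {a : ℝ | ∃ (N : ℕ) (p : Fin (N + 2) → Pt), IsAdmissible cfg x S N p ∧
    a = pathAction s N p}

/-- The sequence `p` with `z` inserted between `p i` and `p (i+1)`. -/
def insertPt {N : ℕ} (p : Fin (N + 2) → Pt) (i : Fin (N + 1)) (z : Pt) : Fin (N + 3) → Pt :=
  Fin.insertNth (α := fun _ => Pt) i.succ.castSucc z p

theorem insertPt_same {N : ℕ} (p : Fin (N + 2) → Pt) (i : Fin (N + 1)) (z : Pt) :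
    insertPt p i z i.succ.castSucc = z := by
  simp [insertPt]

theorem insertPt_succAbove {N : ℕ} (p : Fin (N + 2) → Pt) (i : Fin (N + 1)) (z : Pt)
    (m : Fin (N + 2)) : insertPt p i z (i.succ.castSucc.succAbove m) = p m := by
  simp [insertPt]

theorem insertPt_of_le {N : ℕ} (p : Fin (N + 2) → Pt) (i : Fin (N + 1)) (z : Pt)
    (m : Fin (N + 2)) (h : m.val ≤ i.val) : insertPt p i z m.castSucc = p m := by
  rw [← insertPt_succAbove p i z m, Fin.succAbove_of_castSucc_lt]
  simp only [Fin.lt_def, Fin.val_castSucc, Fin.val_succ]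
  omega

theorem insertPt_of_gt {N : ℕ} (p : Fin (N + 2) → Pt) (i : Fin (N + 1)) (z : Pt)
    (m : Fin (N + 2)) (h : i.val < m.val) : insertPt p i z m.succ = p m := by
  rw [← insertPt_succAbove p i z m, Fin.succAbove_of_le_castSucc]
  simp only [Fin.le_def, Fin.val_castSucc, Fin.val_succ]
  omega

theorem isAdmissible_insertPt {cfg : Finset Pt} {x : Pt} {S : Set Pt} {N : ℕ}
    {p : Fin (N + 2) → Pt} (hadm : IsAdmissible cfg x S N p) {z : Pt} (hz : z ∈ cfg)
    (hnv : ∀ i : Fin (N + 2), i ≠ 0 → i ≠ Fin.last (N + 1) → p i ≠ z) (i : Fin (N + 1)) :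
    IsAdmissible cfg x S (N + 1) (insertPt p i z) := by
  obtain ⟨h0, hl, hc, hd⟩ := hadm
  have key : ∀ m : Fin (N + 2), i.succ.castSucc.succAbove m ≠ 0 →
      i.succ.castSucc.succAbove m ≠ Fin.last (N + 2) → m ≠ 0 ∧ m ≠ Fin.last (N + 1) := by
    intro m hm0 hml
    refine ⟨fun h => hm0 ?_, fun h => hml ?_⟩
    · rw [h]; exact Fin.succAbove_ne_zero_zero (Fin.ne_of_val_ne (by simp))
    · rw [h]; exact Fin.succAbove_ne_last_last (Fin.ne_of_val_ne (by simp; omega))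
  refine ⟨?_, ?_, ?_, ?_⟩
  · rw [← h0]; exact insertPt_of_le p i z 0 (by simp)
  · rw [← Fin.succ_last, insertPt_of_gt p i z _ (by simp; omega)]; exact hl
  · intro j hj0 hjl
    rcases Fin.eq_self_or_eq_succAbove i.succ.castSucc j with rfl | ⟨m, rfl⟩
    · rwa [insertPt_same]
    · obtain ⟨a, b⟩ := key m hj0 hjl
      rw [insertPt_succAbove]; exact hc m a b
  · intro j k hj0 hjl hk0 hkl hjk
    rcases Fin.eq_self_or_eq_succAbove i.succ.castSucc j with rfl | ⟨m, rfl⟩ <;>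
      rcases Fin.eq_self_or_eq_succAbove i.succ.castSucc k with rfl | ⟨n, rfl⟩
    · exact absurd rfl hjk
    · obtain ⟨a, b⟩ := key n hk0 hkl
      rw [insertPt_same, insertPt_succAbove]; exact (hnv n a b).symm
    · obtain ⟨a, b⟩ := key m hj0 hjl
      rw [insertPt_same, insertPt_succAbove]; exact hnv m a b
    · obtain ⟨a, b⟩ := key m hj0 hjl
      obtain ⟨c, d⟩ := key n hk0 hkl
      rw [insertPt_succAbove, insertPt_succAbove]
      exact hd m n a b c d (fun h => hjk (by rw [h]))

theorem pathLength_insertPt {N : ℕ} (p : Fin (N + 2) → Pt) (i : Fin (N + 1)) (z : Pt) :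
    pathLength (N + 1) (insertPt p i z) =
      pathLength N p - ‖p i.succ - p i.castSucc‖ + ‖z - p i.castSucc‖ + ‖p i.succ - z‖ := by
  unfold pathLength
  -- Split off the two segments adjacent to `z` on the left, and the segment they replace
  -- on the right; the remaining segments match one to one.
  rw [Fin.sum_univ_succAbove _ i.succ, Fin.sum_univ_succAbove _ i,
    Fin.sum_univ_succAbove (fun k : Fin (N + 1) => ‖p k.succ - p k.castSucc‖) i]
  have h1 : insertPt p i z i.succ.succ = p i.succ := insertPt_of_gt p i z _ (by simp)
  have h2 : insertPt p i z i.castSucc.castSucc = p i.castSucc := insertPt_of_le p i z _ (by simp)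
  have h3 : insertPt p i z i.castSucc.succ = z := insertPt_same p i z
  have hrest : ∀ m : Fin N,
      ‖insertPt p i z (i.succ.succAbove (i.succAbove m)).succ -
        insertPt p i z (i.succ.succAbove (i.succAbove m)).castSucc‖ =
      ‖p (i.succAbove m).succ - p (i.succAbove m).castSucc‖ := by
    intro m
    have hne : i.succAbove m ≠ i := Fin.succAbove_ne i m
    generalize i.succAbove m = k at hne
    rcases lt_or_gt_of_ne (Fin.val_ne_of_ne hne) with hk | hk
    · rw [Fin.succAbove_of_castSucc_lt _ _ (Fin.lt_def.2 (by simp; omega)),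
        Fin.succ_castSucc, insertPt_of_le p i z k.succ (by simp only [Fin.val_succ, Fin.val_castSucc]; omega),
        insertPt_of_le p i z k.castSucc (by simp only [Fin.val_succ, Fin.val_castSucc]; omega)]
    · rw [Fin.succAbove_of_le_castSucc _ _ (Fin.le_def.2 (by simp; omega)),
        ← Fin.succ_castSucc, insertPt_of_gt p i z k.succ (by simp only [Fin.val_succ, Fin.val_castSucc]; omega),
        insertPt_of_gt p i z k.castSucc (by simp only [Fin.val_succ, Fin.val_castSucc]; omega)]
  rw [Finset.sum_congr rfl (fun m _ => hrest m)]
  have h4 : i.succ.succAbove i = i.castSucc := by simp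
  rw [h4]
  rw [h1, insertPt_same, h2, h3]
  ring

theorem IsAdmissible.le_card {cfg : Finset Pt} {x : Pt} {S : Set Pt} {N : ℕ}
    {p : Fin (N + 2) → Pt} (hadm : IsAdmissible cfg x S N p) : N ≤ cfg.card := by
  obtain ⟨-, -, hc, hd⟩ := hadm
  have ne0 : ∀ k : Fin N, k.castSucc.succ ≠ (0 : Fin (N + 2)) := fun k => Fin.succ_ne_zero _
  have nel : ∀ k : Fin N, k.castSucc.succ ≠ Fin.last (N + 1) := fun k => by
    simp [Fin.ext_iff]; omega
  have h := Finset.card_le_card_of_injOn (s := (Finset.univ : Finset (Fin N))) (t := cfg)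
    (fun k => p k.castSucc.succ) (fun k _ => hc _ (ne0 k) (nel k)) (by
      intro a _ b _ hab
      by_contra hne
      exact hd _ _ (ne0 a) (nel a) (ne0 b) (nel b) (by simpa [Fin.ext_iff] using hne) hab)
  simpa using h

theorem actionInf_le {cfg : Finset Pt} {s : ℝ} (hs : 0 < s) {x : Pt} {S : Set Pt} {N : ℕ}
    {p : Fin (N + 2) → Pt} (hadm : IsAdmissible cfg x S N p) :
    actionInf cfg s x S ≤ pathAction s N p := by
  refine csInf_le ⟨-(cfg.card : ℝ), ?_⟩ ⟨N, p, hadm, rfl⟩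
  rintro a ⟨M, q, hq, rfl⟩
  have h1 : (M : ℝ) ≤ cfg.card := by exact_mod_cast hq.le_card
  have h2 : 0 ≤ pathLength M q ^ 2 / (2 * s) := by positivity
  unfold pathAction
  linarith

/-- The hypotenuse estimate `√(a² + h²) ≤ a + h²/(2a)`, for the right triangle with vertices
`z`, `w`, `y` and right angle at `w`. -/
theorem norm_sub_le_of_orth (z w y : Pt) (horth : ⟪z - w, y - w⟫ = (0 : ℝ))
    (hpos : 0 < ‖y - w‖) :
    ‖z - y‖ ≤ ‖y - w‖ + ‖z - w‖ ^ 2 / 2 * (1 / ‖y - w‖) := by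
  have h1 : ‖z - y‖ ^ 2 = ‖z - w‖ ^ 2 + ‖y - w‖ ^ 2 := by
    have := norm_sub_sq_real (z - w) (y - w)
    rw [horth, sub_sub_sub_cancel_right] at this
    linarith
  refine (sq_le_sq₀ (norm_nonneg _) (by positivity)).mp ?_
  rw [h1]
  have h2 : (‖y - w‖ + ‖z - w‖ ^ 2 / 2 * (1 / ‖y - w‖)) ^ 2 =
      ‖z - w‖ ^ 2 + ‖y - w‖ ^ 2 + (‖z - w‖ ^ 2 / 2 * (1 / ‖y - w‖)) ^ 2 := by
    field_simp
    ring
  rw [h2]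
  nlinarith [sq_nonneg (‖z - w‖ ^ 2 / 2 * (1 / ‖y - w‖))]

/-- A minimizer cannot bypass a configuration point `z` lying too close to one
of its straight segments: if the orthogonal projection `z*` of `z` onto the line through
`x_i, x_{i+1}` lies on the closed segment between them, with `s₁ = |x_i − z*| > 0`,
`s₂ = |x_{i+1} − z*| > 0`, `h = |z − z*|`, and `B = (h²/2)(1/s₁ + 1/s₂)`, then
`2 L B + B² ≥ 2 s`. -/
theorem minimizer_no_nearby_unvisited_point (s : ℝ) (hs : 0 < s) (x : Pt) (S : Set Pt)
    (hS : S.Nonempty) (cfg : Finset Pt) (N : ℕ) (p : Fin (N + 2) → Pt)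
    (hadm : IsAdmissible cfg x S N p)
    (hmin : pathAction s N p = actionInf cfg s x S)
    (z : Pt) (hz : z ∈ cfg)
    (hznotvisited : ∀ i : Fin (N + 2), i ≠ 0 → i ≠ Fin.last (N + 1) → p i ≠ z)
    (i : Fin (N + 1)) (zstar : Pt)
    (hseg : zstar ∈ segment ℝ (p i.castSucc) (p i.succ))
    (horth : ⟪z - zstar, p i.succ - p i.castSucc⟫ = (0 : ℝ))
    (hs₁ : 0 < ‖p i.castSucc - zstar‖) (hs₂ : 0 < ‖p i.succ - zstar‖) :
    2 * pathLength N p *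
        ((‖z - zstar‖ ^ 2 / 2) * (1 / ‖p i.castSucc - zstar‖ + 1 / ‖p i.succ - zstar‖)) +
        ((‖z - zstar‖ ^ 2 / 2) * (1 / ‖p i.castSucc - zstar‖ + 1 / ‖p i.succ - zstar‖)) ^ 2 ≥
      2 * s := by
  -- `z*` lies on the segment, so both legs are orthogonal to `z - z*`.
  have horths : ⟪z - zstar, p i.castSucc - zstar⟫ = (0 : ℝ) ∧
      ⟪z - zstar, p i.succ - zstar⟫ = (0 : ℝ) := by
    obtain ⟨u, v, -, -, huv, hw⟩ := hseg
    have hu : u = 1 - v := by linarith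
    have e1 : p i.castSucc - zstar = (-v) • (p i.succ - p i.castSucc) := by
      rw [← hw, hu]; module
    have e2 : p i.succ - zstar = (1 - v) • (p i.succ - p i.castSucc) := by
      rw [← hw, hu]; module
    rw [e1, e2, inner_smul_right, inner_smul_right, horth]
    simp
  have hsum : ‖p i.castSucc - zstar‖ + ‖p i.succ - zstar‖ = ‖p i.succ - p i.castSucc‖ := by
    have h := dist_add_dist_of_mem_segment hseg
    rw [dist_eq_norm, dist_eq_norm, dist_eq_norm] at h
    rw [norm_sub_rev (p i.succ) zstar, norm_sub_rev (p i.succ) (p i.castSucc), h]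
  have ha := norm_sub_le_of_orth z zstar (p i.castSucc) horths.1 hs₁
  have hb := norm_sub_le_of_orth z zstar (p i.succ) horths.2 hs₂
  have hlen := pathLength_insertPt p i z
  have hact := actionInf_le hs (isAdmissible_insertPt hadm hz hznotvisited i)
  rw [← hmin] at hact
  unfold pathAction at hact
  rw [norm_sub_rev (p i.succ) z] at hlen
  set B := ‖z - zstar‖ ^ 2 / 2 * (1 / ‖p i.castSucc - zstar‖ + 1 / ‖p i.succ - zstar‖) with hB
  have hle : pathLength (N + 1) (insertPt p i z) ≤ pathLength N p + B := by
    rw [hlen, hB, mul_add]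
    linarith
  have hnn : 0 ≤ pathLength (N + 1) (insertPt p i z) :=
    Finset.sum_nonneg fun _ _ => norm_nonneg _
  have hsq : pathLength (N + 1) (insertPt p i z) ^ 2 ≤ (pathLength N p + B) ^ 2 :=
    pow_le_pow_left₀ hnn hle 2
  have hkin : 1 ≤ (pathLength (N + 1) (insertPt p i z) ^ 2 - pathLength N p ^ 2) / (2 * s) := by
    rw [sub_div]
    push_cast at hact
    linarith
  rw [le_div_iff₀ (by positivity)] at hkin
  nlinarith [hkin, hsq]
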